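/- Let ψ ∈ N(σ) and i ∈ {1, …, |N(σ)|} with Pr[ψ ↝ i] > 0. Then for every item e ∈ E \ dom(ψ): α·E[μ(e) | ψ ↝ i] ≥ E[δ⁺_ψ(e) | ψ ↝ i]·υ_ψ. -/

import Mathlib

/-!
Common framework for the Stochastic Submodular Cover problem
(Hellerstein–Kletenik–Parthasarathy, "A Tight Bound for Stochastic Submodular Cover").
-/

namespace SSC

open Finset
open scoped Classical

noncomputable section

variable {E O : Type*}

/-- A subrealization assigns to each item either a state or `none` (unassigned).
A realization corresponds to the case where every item is assigned. -/
abbrev Sub (E O : Type*) := E → Option O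

/-- `subext ψ ψ'` means `ψ ⊆ ψ'` as partial assignments of states to items. -/
def subext (ψ ψ' : Sub E O) : Prop := ∀ e o, ψ e = some o → ψ' e = some o

/-- `ssubext ψ ψ'` means `ψ ⊂ ψ'` (strict extension). -/
def ssubext (ψ ψ' : Sub E O) : Prop := subext ψ ψ' ∧ ψ ≠ ψ'

/-- Extend a subrealization `ψ` by assigning state `o` to item `e`. -/
def updateSub [DecidableEq E] (ψ : Sub E O) (e : E) (o : O) : Sub E O :=
  fun e' => if e' = e then some o else ψ e'

/-- View a (full) realization as a subrealization. -/
def toSub (φ : E → O) : Sub E O := fun e => some (φ e)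

variable [Fintype E] [DecidableEq E] [Fintype O] [DecidableEq O]

/-- An instance of the Stochastic Submodular Cover problem: positive item costs `c`,
a probability mass function `p` on realizations with mutually independent item states,
and a utility function `f` on subrealizations which is zero on the empty subrealization,
nonnegative, monotone and submodular (pointwise polymatroid), and equal to the goal
value `Q > 0` on every full realization (coverability). -/
structure Problem (E O : Type*) [Fintype E] [DecidableEq E] [Fintype O] [DecidableEq O] where
  c : E → ℝ
  c_pos : ∀ e, 0 < c e
  p : (E → O) → ℝ
  p_nonneg : ∀ φ, 0 ≤ p φ
  p_sum : ∑ φ : E → O, p φ = 1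
  indep : ∀ φ : E → O, p φ = ∏ e : E, ∑ φ' : E → O, if φ' e = φ e then p φ' else 0
  f : Sub E O → ℝ
  f_nonneg : ∀ ψ, 0 ≤ f ψ
  f_empty : f (fun _ => none) = 0
  f_mono : ∀ ψ ψ' : Sub E O, subext ψ ψ' → f ψ ≤ f ψ'
  f_submod : ∀ (ψ ψ' : Sub E O) (e : E) (o : O), subext ψ ψ' → ψ' e = none →
      f (updateSub ψ' e o) - f ψ' ≤ f (updateSub ψ e o) - f ψ
  Q : ℝ
  Q_pos : 0 < Q
  f_cover : ∀ φ : E → O, f (toSub φ) = Q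

variable (M : Problem E O)

/-- Expectation of a random variable `X` with respect to the random realization `Φ`. -/
def Ex (X : (E → O) → ℝ) : ℝ := ∑ φ : E → O, M.p φ * X φ

/-- Probability of an event `A` of the random realization `Φ`. -/
def Pr (A : (E → O) → Prop) : ℝ := ∑ φ : E → O, if A φ then M.p φ else 0

/-- Conditional expectation `E[X | A]`. -/
def cEx (X : (E → O) → ℝ) (A : (E → O) → Prop) : ℝ :=
  (∑ φ : E → O, if A φ then M.p φ * X φ else 0) / Pr M A

/-- The random marginal increase in utility `F_ψ(e)` from observing the state of `e`. -/
def Fm (ψ : Sub E O) (e : E) (φ : E → O) : ℝ := M.f (updateSub ψ e (φ e)) - M.f ψ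

/-- The unit price `υ(e|ψ) = c(e) / E[F_ψ(e)]`. -/
def price (ψ : Sub E O) (e : E) : ℝ := M.c e / Ex M (Fm M ψ e)

/-- An adaptive covering policy: at every subrealization `ψ` with `f ψ < Q` it selects an
item outside `dom ψ`. -/
def IsPolicy (π : Sub E O → E) : Prop := ∀ ψ : Sub E O, M.f ψ < M.Q → ψ (π ψ) = none

/-- The `α`-approximate adaptive greedy policy: at every `ψ` with `f ψ < Q` the unit price of
the selected item `σ ψ` is at most `α` times the minimum unit price, i.e.
`υ(σ ψ | ψ) ≤ α · υ(e | ψ)` for every `e ∉ dom ψ`, written multiplicatively so that infinite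
unit prices (zero expected marginal utility) are handled correctly. -/
def IsGreedy (α : ℝ) (σ : Sub E O → E) : Prop :=
  IsPolicy M σ ∧
    ∀ ψ : Sub E O, M.f ψ < M.Q → ∀ e : E, ψ e = none →
      M.c (σ ψ) * Ex M (Fm M ψ e) ≤ α * M.c e * Ex M (Fm M ψ (σ ψ))

/-- One step of executing policy `π` on realization `φ`. -/
def stepPol (π : Sub E O → E) (φ : E → O) (ψ : Sub E O) : Sub E O :=
  if M.f ψ < M.Q then updateSub ψ (π ψ) (φ (π ψ)) else ψ

/-- The subrealization reached after `n` steps of executing `π` on `φ`. -/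
def execAux (π : Sub E O → E) (φ : E → O) : ℕ → Sub E O
  | 0 => fun _ => none
  | n + 1 => stepPol M π φ (execAux π φ n)

/-- The cover `Ψ(π)` constructed by executing `π` on realization `φ`. -/
def cover (π : Sub E O → E) (φ : E → O) : Sub E O := execAux M π φ (Fintype.card E)

/-- `ψ` is visited when executing `π` on realization `φ`. -/
def visits (π : Sub E O → E) (φ : E → O) (ψ : Sub E O) : Prop := ∃ n, execAux M π φ n = ψ

/-- The set `S(π)` of items selected when executing `π` on `φ`. -/
def Ssel (π : Sub E O → E) (φ : E → O) : Finset E :=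
  Finset.univ.filter fun e => cover M π φ e ≠ none

/-- The cost `C(π)` incurred when executing `π` on `φ`. -/
def C (π : Sub E O → E) (φ : E → O) : ℝ := ∑ e ∈ Ssel M π φ, M.c e

/-- An adaptive covering policy of minimum expected cost. -/
def IsOptimal (π : Sub E O → E) : Prop :=
  IsPolicy M π ∧ ∀ π' : Sub E O → E, IsPolicy M π' → Ex M (C M π) ≤ Ex M (C M π')

/-- `N(π)`: the non-leaf nodes of the decision tree of `π` — subrealizations with
`f ψ < Q` that are visited with positive probability. -/
def Nnodes (π : Sub E O → E) : Finset (Sub E O) :=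
  Finset.univ.filter fun ψ => M.f ψ < M.Q ∧ 0 < Pr M fun φ => visits M π φ ψ

/-- The event `ψ ↝ i`, for a marker located at utility value `b = f(ρ_i)`:
`ψ` is the last subrealization visited by `σ` (on the given realization) whose
utility is at most `b`. -/
def leadsTo (σ : Sub E O → E) (b : ℝ) (ψ : Sub E O) (φ : E → O) : Prop :=
  visits M σ φ ψ ∧ M.f ψ ≤ b ∧
    ∀ ψ' : Sub E O, visits M σ φ ψ' → M.f ψ' ≤ b → subext ψ' ψ

/-- The revenue `λ_i = υ_ψ · ε_i` collected by `σ` from the marker located at utility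
value `b = f(ρ_i)` with interval length `εi`, where `ψ` is the unique subrealization
with `ψ ↝ i`. -/
def lam (σ : Sub E O → E) (b εi : ℝ) (φ : E → O) : ℝ :=
  ∑ ψ : Sub E O, if leadsTo M σ b ψ φ then price M ψ (σ ψ) * εi else 0

/-- The revenue `μ(e)` collected by the optimal policy `πs` from item `e`
(relative to the greedy policy `σ`, both executed on the same realization). -/
def mu (σ πs : Sub E O → E) (e : E) (φ : E → O) : ℝ :=
  if e ∈ Ssel M πs φ then
    if e ∈ Ssel M σ φ then
      ∑ ψ : Sub E O,
        if visits M σ φ ψ ∧ M.f ψ < M.Q ∧ σ ψ = e then price M ψ e * Fm M ψ e φ else 0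
    else M.c e
  else 0

/-- The total revenue `μ*` collected by the optimal policy. -/
def muStar (σ πs : Sub E O → E) (φ : E → O) : ℝ := ∑ e : E, mu M σ πs e φ

/-- Replay of the internal state of policy `πs` in the second stage of the hybrid policy:
starting from the empty subrealization, repeatedly query `πs`; an item whose state is
already recorded in `ψ'` is not re-selected, its recorded state being used instead. -/
def replayAux (πs : Sub E O → E) (ψ' : Sub E O) : ℕ → Sub E O
  | 0 => fun _ => none
  | n + 1 =>
    if M.f (replayAux πs ψ' n) < M.Q then
      match ψ' (πs (replayAux πs ψ' n)) with
      | some o => updateSub (replayAux πs ψ' n) (πs (replayAux πs ψ' n)) o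
      | none => replayAux πs ψ' n
    else replayAux πs ψ' n

/-- The hybrid policy `π^ψ0`: follow `σ` until `ψ0` is visited, then switch to executing
`πs` from the root of its tree, never re-selecting an item of `dom ψ0` and using the
state recorded in `ψ0` instead. -/
def hybrid (σ πs : Sub E O → E) (ψ0 : Sub E O) : Sub E O → E := fun ψ' =>
  if subext ψ0 ψ' then πs (replayAux M πs ψ' (Fintype.card E)) else σ ψ'

/-- `δ⁺_ψ0(e)`: the marginal utility obtained by the hybrid policy `π^ψ0` when it selects
`e` during its second stage, and `0` if `e` is not selected in the second stage. -/
def deltaPlus (σ πs : Sub E O → E) (ψ0 : Sub E O) (e : E) (φ : E → O) : ℝ :=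
  ∑ ψ' : Sub E O,
    if subext ψ0 ψ' ∧ visits M (hybrid M σ πs ψ0) φ ψ' ∧
        ssubext ψ' (cover M (hybrid M σ πs ψ0) φ) ∧ hybrid M σ πs ψ0 ψ' = e
    then Fm M ψ' e φ else 0

/-!
The proof averages over the state of the single item `e`, all other states being fixed. If `σ`
does not select `e` at `ψ`, then neither `ψ ↝ i` nor the selection of `e` by either policy depends
on `Φ(e)`. Whenever `π*` selects `e`, the average of `μ(e)` is exactly `c(e)`: this is trivial if
`σ` misses `e`, and if `σ` selects `e` at `ψ'` it says `υ(e|ψ') · E[F_ψ'(e)] = c(e)`. On the other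
side, submodularity gives `δ⁺_ψ(e) ≤ F_ψ(e)`, and greediness `υ_ψ · E[F_ψ(e)] ≤ α · c(e)`.
If `σ` does select `e` at `ψ`, then `μ(e) = υ_ψ · F_ψ(e) ≥ υ_ψ · δ⁺_ψ(e)` holds pointwise.
-/

section Subrealization

omit [Fintype E] [DecidableEq E] [Fintype O] [DecidableEq O]

variable {ψ ψ' ψ'' : Sub E O} {φ : E → O} {e : E} {o : O}

lemma subext.refl (ψ : Sub E O) : subext ψ ψ := fun _ _ h => h

lemma subext.trans (h : subext ψ ψ') (h' : subext ψ' ψ'') : subext ψ ψ'' :=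
  fun e o he => h' e o (h e o he)

lemma subext.eq_none (h : subext ψ ψ') (he : ψ' e = none) : ψ e = none :=
  Option.eq_none_iff_forall_ne_some.2 fun o ho => Option.some_ne_none o ((h e o ho).symm.trans he)

lemma subext.ne_none (h : subext ψ ψ') (he : ψ e ≠ none) : ψ' e ≠ none :=
  mt h.eq_none he

lemma subext.apply_eq_some (h : subext ψ (toSub φ)) (he : ψ e ≠ none) : ψ e = some (φ e) := by
  obtain ⟨o, ho⟩ := Option.ne_none_iff_exists'.1 he
  exact ho.trans (h e o ho).symm

variable [DecidableEq E]

lemma updateSub_eq_update (ψ : Sub E O) (e : E) (o : O) :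
    updateSub ψ e o = Function.update ψ e (some o) := by
  funext e'
  simp only [updateSub, Function.update_apply]

lemma updateSub_self (ψ : Sub E O) (e : E) (o : O) : updateSub ψ e o e = some o := if_pos rfl

lemma updateSub_of_ne {e' : E} (h : e' ≠ e) (ψ : Sub E O) (o : O) : updateSub ψ e o e' = ψ e' :=
  if_neg h

lemma updateSub_eq_self (h : ψ e = some o) : updateSub ψ e o = ψ := by
  rw [updateSub_eq_update, ← h, Function.update_eq_self]

lemma subext_updateSub (he : ψ e = none) (o : O) : subext ψ (updateSub ψ e o) := by
  intro e' o' h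
  have hne : e' ≠ e := by
    rintro rfl
    exact Option.some_ne_none o' (h.symm.trans he)
  rwa [updateSub_of_ne hne]

lemma subext.updateSub_subext (h : subext ψ ψ') (he : ψ' e = some o) :
    subext (updateSub ψ e o) ψ' := by
  intro e' o' h'
  by_cases hne : e' = e
  · subst hne
    rwa [updateSub_self, ← he] at h'
  · exact h e' o' ((updateSub_of_ne hne ψ o).symm.trans h')

lemma subext.toSub_update (h : subext ψ (toSub φ)) (he : ψ e = none) (o : O) :
    subext ψ (toSub (Function.update φ e o)) := by
  intro e' o' h'
  have hne : e' ≠ e := by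
    rintro rfl
    exact Option.some_ne_none o' (h'.symm.trans he)
  simpa only [toSub, Function.update_of_ne hne] using h e' o' h'

end Subrealization

section Domain

omit [DecidableEq E] [Fintype O] [DecidableEq O]

/-- The domain `dom ψ` of a subrealization. -/
def dom (ψ : Sub E O) : Finset E := {e | ψ e ≠ none}

lemma mem_dom {ψ : Sub E O} {e : E} : e ∈ dom ψ ↔ ψ e ≠ none := by
  simp only [dom, mem_filter, mem_univ, true_and]

lemma subext.dom_subset {ψ ψ' : Sub E O} (h : subext ψ ψ') : dom ψ ⊆ dom ψ' :=
  fun _ he => mem_dom.2 (h.ne_none (mem_dom.1 he))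

lemma subext.eq_of_card_dom_le {ψ ψ' : Sub E O} (h : subext ψ ψ')
    (hcard : #(dom ψ') ≤ #(dom ψ)) : ψ = ψ' := by
  have hdom : dom ψ = dom ψ' := eq_of_subset_of_card_le h.dom_subset hcard
  funext e
  cases he : ψ e with
  | some o => exact (h e o he).symm
  | none =>
    have hnot : e ∉ dom ψ' := hdom ▸ fun hmem => mem_dom.1 hmem he
    exact (not_not.1 (mt mem_dom.2 hnot)).symm

end Domain

section Execution

variable {M} {π : Sub E O → E} {φ φ' : E → O} {ψ : Sub E O} {m n : ℕ}

lemma execAux_succ_of_lt (h : M.f (execAux M π φ n) < M.Q) :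
    execAux M π φ (n + 1)
      = updateSub (execAux M π φ n) (π (execAux M π φ n)) (φ (π (execAux M π φ n))) :=
  if_pos h

lemma execAux_succ_of_not_lt (h : ¬ M.f (execAux M π φ n) < M.Q) :
    execAux M π φ (n + 1) = execAux M π φ n :=
  if_neg h

lemma execAux_subext_toSub (M : Problem E O) (π : Sub E O → E) (φ : E → O) (n : ℕ) :
    subext (execAux M π φ n) (toSub φ) := by
  induction n with
  | zero => exact fun e o h => absurd h.symm (Option.some_ne_none o)
  | succ n ih =>
    by_cases h : M.f (execAux M π φ n) < M.Q
    · rw [execAux_succ_of_lt h]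
      exact ih.updateSub_subext rfl
    · rwa [execAux_succ_of_not_lt h]

lemma visits.subext_toSub (h : visits M π φ ψ) : subext ψ (toSub φ) := by
  obtain ⟨n, rfl⟩ := h
  exact execAux_subext_toSub M π φ n

lemma execAux_succ_of_ne_none (h : execAux M π φ n (π (execAux M π φ n)) ≠ none) :
    execAux M π φ (n + 1) = execAux M π φ n := by
  by_cases hlt : M.f (execAux M π φ n) < M.Q
  · rw [execAux_succ_of_lt hlt,
      updateSub_eq_self ((execAux_subext_toSub M π φ n).apply_eq_some h)]
  · exact execAux_succ_of_not_lt hlt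

lemma execAux_subext_succ (M : Problem E O) (π : Sub E O → E) (φ : E → O) (n : ℕ) :
    subext (execAux M π φ n) (execAux M π φ (n + 1)) := by
  by_cases hlt : M.f (execAux M π φ n) < M.Q
  · by_cases hnone : execAux M π φ n (π (execAux M π φ n)) = none
    · rw [execAux_succ_of_lt hlt]
      exact subext_updateSub hnone _
    · rw [execAux_succ_of_ne_none hnone]
      exact subext.refl _
  · rw [execAux_succ_of_not_lt hlt]
    exact subext.refl _

lemma execAux_subext (M : Problem E O) (π : Sub E O → E) (φ : E → O) (h : m ≤ n) :
    subext (execAux M π φ m) (execAux M π φ n) := by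
  induction h with
  | refl => exact subext.refl _
  | step _ ih => exact ih.trans (execAux_subext_succ M π φ _)

lemma execAux_eq_of_succ_eq (h : execAux M π φ (n + 1) = execAux M π φ n) (hnm : n ≤ m) :
    execAux M π φ m = execAux M π φ n := by
  induction hnm with
  | refl => rfl
  | step _ ih => exact (congrArg (stepPol M π φ) ih).trans h

lemma execAux_eq_cover (h : Fintype.card E ≤ n) : execAux M π φ n = cover M π φ := by
  have hmono (m) : subext (execAux M π φ m) (execAux M π φ (m + 1)) := execAux_subext_succ M π φ m
  have hcard : #(dom (execAux M π φ n)) = #(dom (execAux M π φ (Fintype.card E))) := by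
    refine Nat.stabilises_of_monotone (f := fun m => #(dom (execAux M π φ m)))
      (monotone_nat_of_le_succ fun m => card_le_card (hmono m).dom_subset)
      (fun m => card_le_univ _) (fun m hm => ?_) h
    have heq : execAux M π φ (m + 1) = execAux M π φ m :=
      ((hmono m).eq_of_card_dom_le hm.ge).symm
    exact congrArg (fun ψ => #(dom ψ)) (congrArg (stepPol M π φ) heq).symm
  exact ((execAux_subext M π φ h).eq_of_card_dom_le hcard.le).symm

lemma execAux_eq_cover_of_succ_eq (h : execAux M π φ (n + 1) = execAux M π φ n) :
    execAux M π φ n = cover M π φ := by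
  rcases le_total n (Fintype.card E) with hn | hn
  · exact (execAux_eq_of_succ_eq h hn).symm
  · exact execAux_eq_cover hn

lemma execAux_subext_cover (M : Problem E O) (π : Sub E O → E) (φ : E → O) (n : ℕ) :
    subext (execAux M π φ n) (cover M π φ) := by
  rw [← execAux_eq_cover (le_max_right n (Fintype.card E))]
  exact execAux_subext M π φ (le_max_left _ _)

lemma execAux_eq_of_subext_toSub (h : subext (execAux M π φ n) (toSub φ')) :
    execAux M π φ' n = execAux M π φ n := by
  induction n with
  | zero => rfl
  | succ n ih =>
    have heq := ih ((execAux_subext_succ M π φ n).trans h)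
    by_cases hlt : M.f (execAux M π φ n) < M.Q
    · have hstate : φ' (π (execAux M π φ n)) = φ (π (execAux M π φ n)) := by
        rw [execAux_succ_of_lt hlt] at h
        exact Option.some.inj (h _ _ (updateSub_self _ _ _))
      rw [execAux_succ_of_lt (heq ▸ hlt), execAux_succ_of_lt hlt, heq, hstate]
    · rw [execAux_succ_of_not_lt (heq ▸ hlt), execAux_succ_of_not_lt hlt, heq]

lemma visits.of_subext_toSub (h : visits M π φ ψ) (hφ' : subext ψ (toSub φ')) :
    visits M π φ' ψ := by
  obtain ⟨n, rfl⟩ := h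
  exact ⟨n, execAux_eq_of_subext_toSub hφ'⟩

lemma visits_update_iff {e : E} (he : ψ e = none) (o : O) :
    visits M π (Function.update φ e o) ψ ↔ visits M π φ ψ := by
  refine ⟨fun h => h.of_subext_toSub ?_, fun h => h.of_subext_toSub ?_⟩
  · simpa only [Function.update_idem, Function.update_eq_self]
      using h.subext_toSub.toSub_update he (φ e)
  · exact h.subext_toSub.toSub_update he o

end Execution

section Selection

variable {M} {π : Sub E O → E} {φ : E → O} {ψ ψ' : Sub E O} {e : E}

/-- The policy `π`, executed on `φ`, selects the hitherto unassigned item `e` at the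
subrealization `ψ`. For a function `π` that is not a covering policy this singles out the
selections that make progress. -/
structure SelectsAt (M : Problem E O) (π : Sub E O → E) (φ : E → O) (e : E) (ψ : Sub E O) :
    Prop where
  visited : visits M π φ ψ
  f_lt : M.f ψ < M.Q
  policy_eq : π ψ = e
  unassigned : ψ e = none

lemma IsPolicy.selectsAt_iff (hπ : IsPolicy M π) :
    SelectsAt M π φ e ψ ↔ visits M π φ ψ ∧ M.f ψ < M.Q ∧ π ψ = e :=
  ⟨fun h => ⟨h.visited, h.f_lt, h.policy_eq⟩,
    fun ⟨hvis, hlt, he⟩ => ⟨hvis, hlt, he, he ▸ hπ ψ hlt⟩⟩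

lemma SelectsAt.exists_execAux (h : SelectsAt M π φ e ψ) :
    ∃ n, execAux M π φ n = ψ ∧ execAux M π φ (n + 1) = updateSub ψ e (φ e) := by
  obtain ⟨⟨n, rfl⟩, hlt, rfl, -⟩ := h
  exact ⟨n, rfl, execAux_succ_of_lt hlt⟩

lemma SelectsAt.cover_ne_none (h : SelectsAt M π φ e ψ) : cover M π φ e ≠ none := by
  obtain ⟨n, -, hnext⟩ := h.exists_execAux
  refine (execAux_subext_cover M π φ (n + 1)).ne_none ?_
  rw [hnext, updateSub_self]
  exact Option.some_ne_none _

lemma SelectsAt.unique (h : SelectsAt M π φ e ψ) (h' : SelectsAt M π φ e ψ') : ψ = ψ' := by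
  obtain ⟨m, hm, hm'⟩ := h.exists_execAux
  obtain ⟨n, hn, hn'⟩ := h'.exists_execAux
  have not_before {k l : ℕ} {a b : Sub E O} (hk : execAux M π φ (k + 1) = updateSub a e (φ e))
      (hl : execAux M π φ l = b) (hb : b e = none) : ¬ k < l := by
    intro hkl
    have hnone := (execAux_subext M π φ (Nat.succ_le_of_lt hkl)).eq_none (hl ▸ hb)
    rw [Nat.succ_eq_add_one, hk, updateSub_self] at hnone
    exact Option.some_ne_none _ hnone
  have hmn : m = n :=
    le_antisymm (not_lt.1 (not_before hn' hm h.unassigned))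
      (not_lt.1 (not_before hm' hn h'.unassigned))
  rw [← hm, ← hn, hmn]

lemma selectsAt_iff_ssubext_cover :
    SelectsAt M π φ e ψ ↔ visits M π φ ψ ∧ ssubext ψ (cover M π φ) ∧ π ψ = e := by
  constructor
  · intro h
    obtain ⟨n, hn, -⟩ := h.exists_execAux
    refine ⟨h.visited, ⟨hn ▸ execAux_subext_cover M π φ n, ?_⟩, h.policy_eq⟩
    intro heq
    exact h.cover_ne_none (heq ▸ h.unassigned)
  · rintro ⟨⟨n, rfl⟩, ⟨-, hne⟩, rfl⟩
    refine ⟨⟨n, rfl⟩, ?_, rfl, ?_⟩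
    · by_contra hlt
      exact hne (execAux_eq_cover_of_succ_eq (execAux_succ_of_not_lt hlt))
    · by_contra hnone
      exact hne (execAux_eq_cover_of_succ_eq (execAux_succ_of_ne_none hnone))

lemma exists_selectsAt_of_execAux_ne_none {n : ℕ} (h : execAux M π φ n e ≠ none) :
    ∃ ψ, SelectsAt M π φ e ψ := by
  induction n with
  | zero => exact absurd rfl h
  | succ n ih =>
    by_cases hnone : execAux M π φ n e = none
    · have hlt : M.f (execAux M π φ n) < M.Q := by
        by_contra hlt
        exact h (execAux_succ_of_not_lt hlt ▸ hnone)
      have he : π (execAux M π φ n) = e := by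
        by_contra hne
        rw [execAux_succ_of_lt hlt, updateSub_of_ne (Ne.symm hne)] at h
        exact h hnone
      exact ⟨_, ⟨n, rfl⟩, hlt, he, hnone⟩
    · exact ih hnone

lemma mem_Ssel_iff_exists_selectsAt : e ∈ Ssel M π φ ↔ ∃ ψ, SelectsAt M π φ e ψ := by
  simp only [Ssel, mem_filter, mem_univ, true_and]
  exact ⟨exists_selectsAt_of_execAux_ne_none, fun ⟨_, h⟩ => h.cover_ne_none⟩

lemma selectsAt_update_iff (o : O) :
    SelectsAt M π (Function.update φ e o) e ψ ↔ SelectsAt M π φ e ψ :=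
  ⟨fun h => ⟨(visits_update_iff h.unassigned o).1 h.visited, h.f_lt, h.policy_eq, h.unassigned⟩,
    fun h => ⟨(visits_update_iff h.unassigned o).2 h.visited, h.f_lt, h.policy_eq, h.unassigned⟩⟩

lemma mem_Ssel_update_iff (o : O) : e ∈ Ssel M π (Function.update φ e o) ↔ e ∈ Ssel M π φ := by
  simp only [mem_Ssel_iff_exists_selectsAt, selectsAt_update_iff]

end Selection

section LeadsTo

variable {M} {σ : Sub E O → E} {φ : E → O} {ψ : Sub E O} {b : ℝ}

lemma leadsTo_iff (hlt : M.f ψ < M.Q) (hnone : ψ (σ ψ) = none) :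
    leadsTo M σ b ψ φ ↔
      visits M σ φ ψ ∧ M.f ψ ≤ b ∧ b < M.f (updateSub ψ (σ ψ) (φ (σ ψ))) := by
  refine and_congr_right fun hvis => and_congr_right fun _ => ?_
  obtain ⟨n, hn, hnext⟩ := SelectsAt.exists_execAux ⟨hvis, hlt, rfl, hnone⟩
  constructor
  · intro hlast
    by_contra hle
    have hnone' := (hlast _ ⟨n + 1, hnext⟩ (not_lt.1 hle)).eq_none hnone
    rw [updateSub_self] at hnone'
    exact Option.some_ne_none _ hnone'
  · rintro hnext_gt ψ' ⟨m, rfl⟩ hm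
    rcases le_or_gt m n with hmn | hnm
    · exact hn ▸ execAux_subext M σ φ hmn
    · have hle := M.f_mono _ _ (execAux_subext M σ φ (Nat.succ_le_of_lt hnm))
      rw [Nat.succ_eq_add_one, hnext] at hle
      exact absurd (hle.trans hm) (not_le.2 hnext_gt)

lemma leadsTo_update_iff (hlt : M.f ψ < M.Q) (hnone : ψ (σ ψ) = none) {e : E} (he : ψ e = none)
    (hne : σ ψ ≠ e) (o : O) :
    leadsTo M σ b ψ (Function.update φ e o) ↔ leadsTo M σ b ψ φ := by
  rw [leadsTo_iff hlt hnone, leadsTo_iff hlt hnone, visits_update_iff he, Function.update_of_ne hne]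

end LeadsTo

section Expectation

variable {M} {A : (E → O) → Prop} {X Y : (E → O) → ℝ}

lemma Ex_mono (h : ∀ φ, X φ ≤ Y φ) : Ex M X ≤ Ex M Y :=
  sum_le_sum fun φ _ => mul_le_mul_of_nonneg_left (h φ) (M.p_nonneg φ)

lemma Ex_const (M : Problem E O) (a : ℝ) : Ex M (fun _ => a) = a := by
  rw [Ex, ← sum_mul, M.p_sum, one_mul]

lemma Ex_nonneg (h : ∀ φ, 0 ≤ X φ) : 0 ≤ Ex M X :=
  (Ex_const M 0).ge.trans (Ex_mono h)

lemma Ex_sum {ι : Type*} (s : Finset ι) (X : ι → (E → O) → ℝ) :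
    Ex M (fun φ => ∑ i ∈ s, X i φ) = ∑ i ∈ s, Ex M (X i) := by
  simp only [Ex, mul_sum]
  exact sum_comm

lemma cEx_const_mul (a : ℝ) (X : (E → O) → ℝ) (A : (E → O) → Prop) :
    cEx M (fun φ => a * X φ) A = a * cEx M X A := by
  simp only [cEx, mul_left_comm _ a, ← mul_ite_zero, ← mul_sum, mul_div_assoc]

lemma cEx_le_cEx_iff (hA : 0 < Pr M A) :
    cEx M X A ≤ cEx M Y A ↔
      Ex M (fun φ => if A φ then X φ else 0) ≤ Ex M (fun φ => if A φ then Y φ else 0) := by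
  simp only [cEx, Ex, mul_ite_zero]
  exact div_le_div_iff_of_pos_right hA

lemma Ex_ite_mono (h : ∀ φ, A φ → X φ ≤ Y φ) :
    Ex M (fun φ => if A φ then X φ else 0) ≤ Ex M (fun φ => if A φ then Y φ else 0) := by
  refine Ex_mono fun φ => ?_
  split_ifs with hA
  exacts [h φ hA, le_rfl]

lemma Pr_nonneg (M : Problem E O) (A : (E → O) → Prop) : 0 ≤ Pr M A := by
  refine sum_nonneg fun φ _ => ?_
  split_ifs
  exacts [M.p_nonneg φ, le_rfl]

/-- The probability that item `e` has state `o`. -/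
def marginal (M : Problem E O) (e : E) (o : O) : ℝ := Pr M fun φ => φ e = o

lemma marginal_nonneg (M : Problem E O) (e : E) (o : O) : 0 ≤ marginal M e o :=
  Pr_nonneg M _

lemma sum_marginal (M : Problem E O) (e : E) : ∑ o, marginal M e o = 1 := by
  simp only [marginal, Pr]
  rw [sum_comm, ← M.p_sum]
  exact sum_congr rfl fun φ _ =>
    (Fintype.sum_eq_single (φ e) fun o ho => if_neg ho.symm).trans (if_pos rfl)

lemma p_eq_prod_marginal (M : Problem E O) (φ : E → O) : M.p φ = ∏ e, marginal M e (φ e) := by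
  rw [M.indep]
  simp only [marginal, Pr]
  congr!

lemma p_update_mul_marginal (M : Problem E O) (φ : E → O) (e : E) (o : O) :
    M.p (Function.update φ e o) * marginal M e (φ e) = M.p φ * marginal M e o := by
  have hrest : ∏ e' ∈ univ.erase e, marginal M e' (Function.update φ e o e')
      = ∏ e' ∈ univ.erase e, marginal M e' (φ e') :=
    prod_congr rfl fun e' he' => by rw [Function.update_of_ne (ne_of_mem_erase he')]
  rw [p_eq_prod_marginal, p_eq_prod_marginal M φ, ← mul_prod_erase _ _ (mem_univ e),
    ← mul_prod_erase univ (fun e' => marginal M e' (φ e')) (mem_univ e), hrest,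
    Function.update_self]
  ring

/-- The conditional expectation of `X` given the states of all items other than `e`: item
states being independent, it is obtained by resampling the state of `e`. -/
def coordEx (M : Problem E O) (e : E) (X : (E → O) → ℝ) (φ : E → O) : ℝ :=
  ∑ o, marginal M e o * X (Function.update φ e o)

variable {e : E} {φ : E → O}

lemma coordEx_mono (h : ∀ o, X (Function.update φ e o) ≤ Y (Function.update φ e o)) :
    coordEx M e X φ ≤ coordEx M e Y φ :=
  sum_le_sum fun o _ => mul_le_mul_of_nonneg_left (h o) (marginal_nonneg M e o)

lemma coordEx_congr (h : ∀ o, X (Function.update φ e o) = Y (Function.update φ e o)) :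
    coordEx M e X φ = coordEx M e Y φ :=
  sum_congr rfl fun o _ => by rw [h o]

lemma coordEx_eq_of_forall_update {a : ℝ} (h : ∀ o, X (Function.update φ e o) = a) :
    coordEx M e X φ = a := by
  simp only [coordEx, h, ← sum_mul, sum_marginal, one_mul]

lemma coordEx_const_mul (a : ℝ) (X : (E → O) → ℝ) :
    coordEx M e (fun φ => a * X φ) φ = a * coordEx M e X φ := by
  simp only [coordEx, mul_left_comm _ a, ← mul_sum]

theorem Ex_coordEx (M : Problem E O) (e : E) (X : (E → O) → ℝ) :
    Ex M (coordEx M e X) = Ex M X := by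
  -- Exchange the old state of `e` with the resampled one.
  have hinv : Function.Involutive
      fun x : (E → O) × O => (Function.update x.1 e x.2, x.1 e) := by
    rintro ⟨φ, o⟩
    simp
  calc Ex M (coordEx M e X)
      = ∑ x : (E → O) × O, M.p x.1 * marginal M e x.2 * X (Function.update x.1 e x.2) := by
        simp only [Ex, coordEx, mul_sum, ← mul_assoc, Fintype.sum_prod_type]
    _ = ∑ x : (E → O) × O, M.p x.1 * marginal M e x.2 * X x.1 := by
        refine Fintype.sum_bijective _ hinv.bijective _ _ fun x => ?_
        rw [p_update_mul_marginal]
    _ = Ex M X := by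
        simp only [Ex, Fintype.sum_prod_type, mul_right_comm _ _ (X _), ← mul_sum, sum_marginal,
          mul_one]

lemma Ex_ite_coordEx (hA : ∀ φ o, A (Function.update φ e o) ↔ A φ) :
    Ex M (fun φ => if A φ then coordEx M e X φ else 0)
      = Ex M (fun φ => if A φ then X φ else 0) := by
  rw [← Ex_coordEx M e (fun φ => if A φ then X φ else 0)]
  congr 1
  funext φ
  split_ifs with h
  · exact coordEx_congr fun o => (if_pos ((hA φ o).2 h)).symm
  · exact (coordEx_eq_of_forall_update fun o => if_neg (mt (hA φ o).1 h)).symm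

lemma Ex_ite_mono_of_coordEx_le (hA : ∀ φ o, A (Function.update φ e o) ↔ A φ)
    (h : ∀ φ, A φ → coordEx M e X φ ≤ coordEx M e Y φ) :
    Ex M (fun φ => if A φ then X φ else 0) ≤ Ex M (fun φ => if A φ then Y φ else 0) := by
  rw [← Ex_ite_coordEx hA, ← Ex_ite_coordEx (X := Y) hA]
  exact Ex_ite_mono h

end Expectation

section MarginalUtility

variable {M} {ψ ψ' : Sub E O} {e : E} {φ : E → O}

lemma Fm_nonneg (he : ψ e = none) (φ : E → O) : 0 ≤ Fm M ψ e φ :=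
  sub_nonneg.2 (M.f_mono _ _ (subext_updateSub he _))

lemma Fm_anti (h : subext ψ ψ') (he : ψ' e = none) (φ : E → O) : Fm M ψ' e φ ≤ Fm M ψ e φ :=
  M.f_submod ψ ψ' e (φ e) h he

lemma Ex_Fm_nonneg (he : ψ e = none) : 0 ≤ Ex M (Fm M ψ e) :=
  Ex_nonneg (Fm_nonneg he)

lemma coordEx_Fm (M : Problem E O) (ψ : Sub E O) (e : E) (φ : E → O) :
    coordEx M e (Fm M ψ e) φ = Ex M (Fm M ψ e) := by
  have hconst (φ') : coordEx M e (Fm M ψ e) φ' = coordEx M e (Fm M ψ e) φ := by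
    simp only [coordEx, Fm, Function.update_self]
  rw [← Ex_coordEx M e (Fm M ψ e), funext hconst, Ex_const]

lemma f_piecewise_le_add_sum_Fm (M : Problem E O) (φ : E → O) (S : Finset E)
    (hS : ∀ e ∈ S, ψ e = none) :
    M.f (S.piecewise (toSub φ) ψ) ≤ M.f ψ + ∑ e ∈ S, Fm M ψ e φ := by
  induction S using Finset.induction_on with
  | empty => simp
  | insert a S ha ih =>
    have hsub : subext ψ (S.piecewise (toSub φ) ψ) := by
      intro e o he
      have heS : e ∉ S := fun h =>
        Option.some_ne_none o (he.symm.trans (hS e (mem_insert_of_mem h)))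
      rwa [piecewise_eq_of_notMem _ _ _ heS]
    have hnone : S.piecewise (toSub φ) ψ a = none := by
      rw [piecewise_eq_of_notMem _ _ _ ha, hS a (mem_insert_self a S)]
    have hstep : (insert a S).piecewise (toSub φ) ψ
        = updateSub (S.piecewise (toSub φ) ψ) a (φ a) := by
      rw [updateSub_eq_update, piecewise_insert, toSub]
    have hanti := Fm_anti (M := M) hsub hnone φ
    have hih := ih fun e he => hS e (mem_insert_of_mem he)
    rw [sum_insert ha, hstep]
    simp only [Fm] at hanti hih ⊢
    linarith

lemma Q_le_add_sum_Fm (M : Problem E O) (ψ : Sub E O) (φ : E → O) :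
    M.Q ≤ M.f ψ + ∑ e with ψ e = none, Fm M ψ e φ := by
  have hfull : ({e | ψ e = none} : Finset E).piecewise (toSub φ) ψ
      = toSub fun e => (ψ e).getD (φ e) := by
    funext e
    cases he : ψ e <;> simp [toSub, Finset.piecewise, he]
  rw [← M.f_cover fun e => (ψ e).getD (φ e), ← hfull]
  exact f_piecewise_le_add_sum_Fm M φ _ fun e he => (mem_filter.1 he).2

lemma exists_Ex_Fm_pos (hψ : M.f ψ < M.Q) : ∃ e, ψ e = none ∧ 0 < Ex M (Fm M ψ e) := by
  have hsum : M.Q - M.f ψ ≤ ∑ e with ψ e = none, Ex M (Fm M ψ e) := by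
    rw [← Ex_sum, ← Ex_const M (M.Q - M.f ψ)]
    exact Ex_mono fun φ => sub_le_iff_le_add'.2 (Q_le_add_sum_Fm M ψ φ)
  have hpos : 0 < ∑ e with ψ e = none, Ex M (Fm M ψ e) := (sub_pos.2 hψ).trans_le hsum
  obtain ⟨e, he, hpos⟩ := exists_lt_of_sum_lt (sum_const_zero.trans_lt hpos)
  exact ⟨e, (mem_filter.1 he).2, hpos⟩

lemma price_nonneg (he : ψ e = none) : 0 ≤ price M ψ e :=
  div_nonneg (M.c_pos e).le (Ex_Fm_nonneg he)

lemma price_mul_Ex_Fm (h : Ex M (Fm M ψ e) ≠ 0) : price M ψ e * Ex M (Fm M ψ e) = M.c e :=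
  div_mul_cancel₀ _ h

end MarginalUtility

section Greedy

variable {M} {α : ℝ} {σ : Sub E O → E} {ψ : Sub E O} {e : E}

lemma IsGreedy.Ex_Fm_pos (hσ : IsGreedy M α σ) (hψ : M.f ψ < M.Q) :
    0 < Ex M (Fm M ψ (σ ψ)) := by
  refine (Ex_Fm_nonneg (hσ.1 ψ hψ)).lt_of_ne' fun hzero => ?_
  obtain ⟨e, he, hpos⟩ := exists_Ex_Fm_pos hψ
  have hle := hσ.2 ψ hψ e he
  rw [hzero, mul_zero] at hle
  exact hle.not_gt (mul_pos (M.c_pos _) hpos)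

lemma IsGreedy.one_le (hσ : IsGreedy M α σ) : 1 ≤ α := by
  have hψ : M.f (fun _ => none) < M.Q := M.f_empty ▸ M.Q_pos
  have hle := hσ.2 _ hψ (σ fun _ => none) rfl
  rw [mul_assoc] at hle
  exact (le_mul_iff_one_le_left (mul_pos (M.c_pos _) (hσ.Ex_Fm_pos hψ))).1 hle

lemma IsGreedy.price_mul_Ex_Fm_le (hσ : IsGreedy M α σ) (hψ : M.f ψ < M.Q) (he : ψ e = none) :
    price M ψ (σ ψ) * Ex M (Fm M ψ e) ≤ α * M.c e := by
  rw [price, div_mul_eq_mul_div, div_le_iff₀ (hσ.Ex_Fm_pos hψ)]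
  exact hσ.2 ψ hψ e he

end Greedy

section Hybrid

variable {M} {σ πs : Sub E O → E} {φ : E → O} {ψ ψ' : Sub E O} {e : E}

lemma replayAux_subext (M : Problem E O) (πs : Sub E O → E) (ψ : Sub E O) (n : ℕ) :
    subext (replayAux M πs ψ n) ψ := by
  induction n with
  | zero => exact fun e o h => absurd h.symm (Option.some_ne_none o)
  | succ n ih =>
    rw [replayAux]
    split_ifs
    · split
      next o ho => exact ih.updateSub_subext ho
      next => exact ih
    · exact ih

lemma visits_replayAux (h : subext ψ (toSub φ)) (n : ℕ) :
    visits M πs φ (replayAux M πs ψ n) := by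
  induction n with
  | zero => exact ⟨0, rfl⟩
  | succ n ih =>
    rw [replayAux]
    split_ifs with hlt
    · split
      next o ho =>
        obtain ⟨m, hm⟩ := ih
        have hstate : φ (πs (replayAux M πs ψ n)) = o := Option.some.inj (h _ _ ho)
        exact ⟨m + 1, by rw [execAux_succ_of_lt (hm ▸ hlt), hm, hstate]⟩
      next => exact ih
    · exact ih

lemma mem_Ssel_of_selectsAt_hybrid (h : SelectsAt M (hybrid M σ πs ψ) φ e ψ')
    (hψ : subext ψ ψ') : e ∈ Ssel M πs φ := by
  have hreplay := replayAux_subext M πs ψ' (Fintype.card E)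
  refine mem_Ssel_iff_exists_selectsAt.2 ⟨replayAux M πs ψ' (Fintype.card E),
    visits_replayAux h.visited.subext_toSub _, (M.f_mono _ _ hreplay).trans_lt h.f_lt, ?_,
    hreplay.eq_none h.unassigned⟩
  simpa only [hybrid, if_pos hψ] using h.policy_eq

lemma deltaPlus_eq_sum_selectsAt (M : Problem E O) (σ πs : Sub E O → E) (ψ : Sub E O) (e : E)
    (φ : E → O) :
    deltaPlus M σ πs ψ e φ
      = ∑ ψ', if subext ψ ψ' ∧ SelectsAt M (hybrid M σ πs ψ) φ e ψ' then Fm M ψ' e φ else 0 := by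
  simp only [deltaPlus, selectsAt_iff_ssubext_cover]

lemma deltaPlus_of_selectsAt (hψ : subext ψ ψ') (h : SelectsAt M (hybrid M σ πs ψ) φ e ψ') :
    deltaPlus M σ πs ψ e φ = Fm M ψ' e φ := by
  rw [deltaPlus_eq_sum_selectsAt, sum_eq_single_of_mem ψ' (mem_univ ψ'), if_pos ⟨hψ, h⟩]
  exact fun a _ hne => if_neg fun ha => hne (ha.2.unique h)

lemma deltaPlus_eq_zero (h : ∀ ψ', subext ψ ψ' → ¬ SelectsAt M (hybrid M σ πs ψ) φ e ψ') :
    deltaPlus M σ πs ψ e φ = 0 := by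
  rw [deltaPlus_eq_sum_selectsAt]
  exact sum_eq_zero fun a _ => if_neg fun ha => h a ha.1 ha.2

lemma deltaPlus_of_notMem_Ssel (he : e ∉ Ssel M πs φ) : deltaPlus M σ πs ψ e φ = 0 :=
  deltaPlus_eq_zero fun _ hψ h => he (mem_Ssel_of_selectsAt_hybrid h hψ)

lemma deltaPlus_le_Fm (he : ψ e = none) (φ : E → O) :
    deltaPlus M σ πs ψ e φ ≤ Fm M ψ e φ := by
  by_cases h : ∃ ψ', subext ψ ψ' ∧ SelectsAt M (hybrid M σ πs ψ) φ e ψ'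
  · obtain ⟨ψ', hψ, hsel⟩ := h
    rw [deltaPlus_of_selectsAt hψ hsel]
    exact Fm_anti hψ hsel.unassigned φ
  · push Not at h
    rw [deltaPlus_eq_zero h]
    exact Fm_nonneg he φ

end Hybrid

section Revenue

variable {M} {α : ℝ} {σ πs : Sub E O → E} {φ : E → O} {ψ : Sub E O} {e : E}

lemma mu_of_notMem_Ssel (he : e ∉ Ssel M πs φ) : mu M σ πs e φ = 0 := if_neg he

lemma mu_of_mem_of_notMem (he : e ∈ Ssel M πs φ) (he' : e ∉ Ssel M σ φ) :
    mu M σ πs e φ = M.c e := by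
  rw [mu, if_pos he, if_neg he']

lemma mu_of_mem_of_selectsAt (hσ : IsPolicy M σ) (he : e ∈ Ssel M πs φ)
    (h : SelectsAt M σ φ e ψ) : mu M σ πs e φ = price M ψ e * Fm M ψ e φ := by
  simp only [mu, if_pos he, if_pos (mem_Ssel_iff_exists_selectsAt.2 ⟨ψ, h⟩), ← hσ.selectsAt_iff]
  rw [sum_eq_single_of_mem ψ (mem_univ ψ), if_pos h]
  exact fun a _ hne => if_neg fun ha => hne (ha.unique h)

lemma coordEx_mu_of_mem (hσ : IsGreedy M α σ) (he : e ∈ Ssel M πs φ) :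
    coordEx M e (mu M σ πs e) φ = M.c e := by
  have he' (o) : e ∈ Ssel M πs (Function.update φ e o) := (mem_Ssel_update_iff o).2 he
  by_cases hmem : e ∈ Ssel M σ φ
  · obtain ⟨ψ, h⟩ := mem_Ssel_iff_exists_selectsAt.1 hmem
    have hne : Ex M (Fm M ψ e) ≠ 0 := h.policy_eq ▸ (hσ.Ex_Fm_pos h.f_lt).ne'
    calc coordEx M e (mu M σ πs e) φ
        = coordEx M e (fun φ' => price M ψ e * Fm M ψ e φ') φ := coordEx_congr fun o =>
          mu_of_mem_of_selectsAt hσ.1 (he' o) ((selectsAt_update_iff o).2 h)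
      _ = price M ψ e * Ex M (Fm M ψ e) := by rw [coordEx_const_mul, coordEx_Fm]
      _ = M.c e := price_mul_Ex_Fm hne
  · exact coordEx_eq_of_forall_update fun o =>
      mu_of_mem_of_notMem (he' o) (mt (mem_Ssel_update_iff o).1 hmem)

lemma price_mul_coordEx_deltaPlus_le (hσ : IsGreedy M α σ) (hψ : M.f ψ < M.Q) (he : ψ e = none) :
    price M ψ (σ ψ) * coordEx M e (deltaPlus M σ πs ψ e) φ
      ≤ α * coordEx M e (mu M σ πs e) φ := by
  by_cases hmem : e ∈ Ssel M πs φ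
  · calc price M ψ (σ ψ) * coordEx M e (deltaPlus M σ πs ψ e) φ
        ≤ price M ψ (σ ψ) * coordEx M e (Fm M ψ e) φ :=
          mul_le_mul_of_nonneg_left (coordEx_mono fun o => deltaPlus_le_Fm he _)
            (price_nonneg (hσ.1 ψ hψ))
      _ = price M ψ (σ ψ) * Ex M (Fm M ψ e) := by rw [coordEx_Fm]
      _ ≤ α * M.c e := hσ.price_mul_Ex_Fm_le hψ he
      _ = α * coordEx M e (mu M σ πs e) φ := by rw [coordEx_mu_of_mem hσ hmem]
  · have hmem' (o) : e ∉ Ssel M πs (Function.update φ e o) := mt (mem_Ssel_update_iff o).1 hmem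
    rw [coordEx_eq_of_forall_update fun o => deltaPlus_of_notMem_Ssel (hmem' o),
      coordEx_eq_of_forall_update fun o => mu_of_notMem_Ssel (hmem' o), mul_zero, mul_zero]

lemma price_mul_deltaPlus_le (hσ : IsGreedy M α σ) (h : SelectsAt M σ φ e ψ) :
    price M ψ e * deltaPlus M σ πs ψ e φ ≤ α * mu M σ πs e φ := by
  by_cases hmem : e ∈ Ssel M πs φ
  · have hprice : 0 ≤ price M ψ e := price_nonneg h.unassigned
    calc price M ψ e * deltaPlus M σ πs ψ e φ
        ≤ price M ψ e * Fm M ψ e φ :=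
          mul_le_mul_of_nonneg_left (deltaPlus_le_Fm h.unassigned φ) hprice
      _ ≤ α * (price M ψ e * Fm M ψ e φ) :=
          le_mul_of_one_le_left (mul_nonneg hprice (Fm_nonneg h.unassigned φ)) hσ.one_le
      _ = α * mu M σ πs e φ := by rw [mu_of_mem_of_selectsAt hσ.1 hmem h]
  · rw [deltaPlus_of_notMem_Ssel hmem, mu_of_notMem_Ssel hmem, mul_zero, mul_zero]

end Revenue

theorem mu_delta_bound_general {M : Problem E O} {α : ℝ} {σ : Sub E O → E}
    (hσ : IsGreedy M α σ) (πs : Sub E O → E) {b : ℝ} {ψ : Sub E O} (hψ : M.f ψ < M.Q)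
    (hpos : 0 < Pr M (leadsTo M σ b ψ)) {e : E} (he : ψ e = none) :
    cEx M (deltaPlus M σ πs ψ e) (leadsTo M σ b ψ) * price M ψ (σ ψ)
      ≤ α * cEx M (mu M σ πs e) (leadsTo M σ b ψ) := by
  rw [mul_comm, ← cEx_const_mul, ← cEx_const_mul, cEx_le_cEx_iff hpos]
  by_cases hsel : σ ψ = e
  · refine Ex_ite_mono fun φ hleads => ?_
    rw [hsel]
    exact price_mul_deltaPlus_le hσ ⟨hleads.1, hψ, hsel, he⟩
  · have hinv (φ o) : leadsTo M σ b ψ (Function.update φ e o) ↔ leadsTo M σ b ψ φ :=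
      leadsTo_update_iff hψ (hσ.1 ψ hψ) he hsel o
    refine Ex_ite_mono_of_coordEx_le hinv fun φ _ => ?_
    rw [coordEx_const_mul, coordEx_const_mul]
    exact price_mul_coordEx_deltaPlus_le hσ hψ he

/-- For `ψ ∈ N(σ)` and a marker index `i` with `Pr[ψ ↝ i] > 0`, for every
item `e ∉ dom ψ`: `α·E[μ(e) | ψ ↝ i] ≥ E[δ⁺_ψ(e) | ψ ↝ i]·υ_ψ`. -/
theorem mu_delta_bound
    (M : Problem E O) (α : ℝ) (hα : 1 ≤ α)
    (σ : Sub E O → E) (hσ : IsGreedy M α σ)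
    (πs : Sub E O → E) (hπs : IsOptimal M πs)
    (t : ℕ) (ρ : ℕ → Sub E O)
    (hcard : t = (Nnodes M σ).card)
    (hρmem : ∀ i, 1 ≤ i → i ≤ t → ρ i ∈ Nnodes M σ)
    (hρinj : ∀ i j, 1 ≤ i → i ≤ t → 1 ≤ j → j ≤ t → ρ i = ρ j → i = j)
    (hρmono : ∀ i j, 1 ≤ i → i ≤ j → j ≤ t → M.f (ρ i) ≤ M.f (ρ j))
    (i : ℕ) (hi1 : 1 ≤ i) (hit : i ≤ t)
    (ψ : Sub E O) (hmem : ψ ∈ Nnodes M σ)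
    (hpos : 0 < Pr M (leadsTo M σ (M.f (ρ i)) ψ))
    (e : E) (he : ψ e = none) :
    cEx M (deltaPlus M σ πs ψ e) (leadsTo M σ (M.f (ρ i)) ψ) * price M ψ (σ ψ)
      ≤ α * cEx M (mu M σ πs e) (leadsTo M σ (M.f (ρ i)) ψ) :=
  mu_delta_bound_general hσ πs (mem_filter.1 hmem).2.1 hpos he

end
end SSC
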